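/- arXiv:1609.04271 — 4 statements merged into one kernel-verified Lean document; each statement's English description precedes it below -/
import Mathlib

section
/- E' = π_E(Ω) is a countable dense subset of E, and every point of E' has a unique coding: for every x ∈ Ω, if y ∈ {1,…,5}^ℕ satisfies π_E(y) = π_E(x), then y = x. -/
/-!
Comparing imaginary parts digit by digit determines codings of points of `E'`.

The attractor lies in the unit square (`mem_square`). A point coded by a sequence ending in `4^∞`
satisfies moreover `0 < Im p < 1` and `0 < Re p` (`omega_interior`), because the letter `4` has
digit `2 + i` and these strict inequalities are inherited under the maps `φ_j`. So if `x ∈ Ω` and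
`y` code points with the same imaginary part, then `3 * Im p` lies strictly between two consecutive
integers, so the imaginary parts of the first digits agree, and so do the imaginary parts of the points
coded by the two shifted sequences. Inductively all imaginary digits of `x` and `y` agree
(`im_digits_eq`). Since `4` is the only letter whose digit has imaginary part `1`, also `y ∈ Ω`.
Then both tails have real part in `(0, 1]`, which forces the real digits to agree too, and a digit
determines its letter (`letter_eq`).

For countability and density, `E'` is identified (`eset_eq_range`) with the set of points
`φ_w(c)`, where `w` runs over finite words and `c = 1 + i/2` is the fixed point of `φ_4`. Every
point of `E` lies in some `φ_w(E)` with `w` of length `n`, hence is within `O(3^{-n})` of `φ_w(c)`.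
-/

open MeasureTheory

noncomputable section

/-- The alphabet `{1,…,5}`, encoded as `Fin 5` (letter `k` is index `k-1`). -/
abbrev Letter := Fin 5

/-- The letter `1`. -/
def l1 : Letter := 0
/-- The letter `2`. -/
def l2 : Letter := 1
/-- The letter `3`. -/
def l3 : Letter := 2
/-- The letter `4`. -/
def l4 : Letter := 3
/-- The letter `5`. -/
def l5 : Letter := 4

/-- The digit set of `E`: `(d_1,…,d_5) = (0, 1, 2, 2+i, 1+2i)`. -/
def dE : Letter → ℂ := ![0, 1, 2, 2 + Complex.I, 1 + 2 * Complex.I]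

/-- The digit set of `F`: `(e_1,…,e_5) = (1+2i, 1+i, 1, 0, 2+i)`. -/
def dF : Letter → ℂ := ![1 + 2 * Complex.I, 1 + Complex.I, 1, 0, 2 + Complex.I]

/-- The map `φ^E_j(z) = (z + d_j)/3`. -/
def phiE (j : Letter) (z : ℂ) : ℂ := (z + dE j) / 3

/-- The map `φ^F_j(z) = (z + e_j)/3`. -/
def phiF (j : Letter) (z : ℂ) : ℂ := (z + dF j) / 3

/-- For a finite word `w = w_1⋯w_n`, the composition `φ_{w_1} ∘ ⋯ ∘ φ_{w_n}`
(the empty word gives the identity). -/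
def iterPhi (φ : Letter → ℂ → ℂ) : List Letter → ℂ → ℂ
  | [] => id
  | j :: w => φ j ∘ iterPhi φ w

/-- `K` is the attractor of the IFS `{φ_j}`: the (unique) nonempty compact set with
`K = ⋃_j φ_j(K)`. -/
def IsAttractor (φ : Letter → ℂ → ℂ) (K : Set ℂ) : Prop :=
  K.Nonempty ∧ IsCompact K ∧ K = ⋃ j, φ j '' K

/-- The prefix `x_1⋯x_n` of the sequence `x`. -/
def preWord (x : ℕ → Letter) (n : ℕ) : List Letter := List.ofFn fun i : Fin n => x i

/-- The factor `x_{j+1}⋯x_{j+L}` of `x` (`j` entries skipped, length `L`). -/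
def fword (x : ℕ → Letter) (j L : ℕ) : List Letter := List.ofFn fun i : Fin L => x (j + i)

/-- `p = π_K(x)`, i.e. `p` is the point of `⋂_{n≥1} φ_{x_1⋯x_n}(K)`. -/
def codes (φ : Letter → ℂ → ℂ) (K : Set ℂ) (x : ℕ → Letter) (p : ℂ) : Prop :=
  ∀ n, p ∈ iterPhi φ (preWord x n) '' K

/-- `Ω`: the sequences that are eventually constant equal to the letter `4`. -/
def OmegaSeq : Set (ℕ → Letter) := {x | ∃ N, ∀ n, N ≤ n → x n = l4}

/-- `Λ(x,y) = n`: the separation number of `(x,y)` for the IFS `φ` with attractor `K`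
is `n`, i.e. `n` is the largest integer with `φ_{x_1⋯x_n}(K) ∩ φ_{y_1⋯y_n}(K) ≠ ∅`. -/
def SepNum (φ : Letter → ℂ → ℂ) (K : Set ℂ) (x y : ℕ → Letter) (n : ℕ) : Prop :=
  (iterPhi φ (preWord x n) '' K ∩ iterPhi φ (preWord y n) '' K).Nonempty ∧
    ∀ m, n < m → iterPhi φ (preWord x m) '' K ∩ iterPhi φ (preWord y m) '' K = ∅

/-- The factor of `x` starting at position `j` (0-indexed) of length `L` is an
`E`-special segment: either `35^k` followed by a letter `≠ 5` (so `L = k+1`, `k ≥ 1`),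
or `42^{k-1}5` (so `L = k+1`, `k ≥ 1`). -/
def ESpecial (x : ℕ → Letter) (j L : ℕ) : Prop :=
  (2 ≤ L ∧ x j = l3 ∧ (∀ i, 1 ≤ i → i < L → x (j + i) = l5) ∧ x (j + L) ≠ l5) ∨
  (2 ≤ L ∧ x j = l4 ∧ (∀ i, 1 ≤ i → i < L - 1 → x (j + i) = l2) ∧ x (j + L - 1) = l5)

/-- The entry of `x` at position `j` is an `E`-plain segment: it belongs to no
`E`-special segment of `x`. -/
def EPlain (x : ℕ → Letter) (j : ℕ) : Prop :=
  ∀ p L, ESpecial x p L → ¬(p ≤ j ∧ j < p + L)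

/-- An `E`-segment: an `E`-special segment, or a single `E`-plain entry. -/
def ESegment (x : ℕ → Letter) (j L : ℕ) : Prop :=
  ESpecial x j L ∨ (L = 1 ∧ EPlain x j)

/-- The factor of `u` starting at position `j` of length `L` is an `F`-special segment:
`42^m5` followed by a letter `≠ 5` (`L = m+2`, `m ≥ 0`), or `42^m55` (`L = m+3`, `m ≥ 0`),
or `35` (`L = 2`). -/
def FSpecial (u : ℕ → Letter) (j L : ℕ) : Prop :=
  (2 ≤ L ∧ u j = l4 ∧ (∀ i, 1 ≤ i → i < L - 1 → u (j + i) = l2) ∧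
    u (j + L - 1) = l5 ∧ u (j + L) ≠ l5) ∨
  (3 ≤ L ∧ u j = l4 ∧ (∀ i, 1 ≤ i → i < L - 2 → u (j + i) = l2) ∧
    u (j + L - 2) = l5 ∧ u (j + L - 1) = l5) ∨
  (L = 2 ∧ u j = l3 ∧ u (j + 1) = l5)

/-- The entry of `u` at position `j` is an `F`-plain segment. -/
def FPlain (u : ℕ → Letter) (j : ℕ) : Prop :=
  ∀ p L, FSpecial u p L → ¬(p ≤ j ∧ j < p + L)

/-- An `F`-segment: an `F`-special segment, or a single `F`-plain entry. -/
def FSegment (u : ℕ → Letter) (j L : ℕ) : Prop :=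
  FSpecial u j L ∨ (L = 1 ∧ FPlain u j)

/-- `b` enumerates the starting positions of a factorization of `x` into consecutive
segments: `b 0 = 0` and for each `j`, the factor occupying positions `[b j, b (j+1))`
is a segment (in the sense of `Seg`). -/
def SegDecomp (Seg : (ℕ → Letter) → ℕ → ℕ → Prop) (x : ℕ → Letter) (b : ℕ → ℕ) : Prop :=
  b 0 = 0 ∧ ∀ j, Seg x (b j) (b (j + 1) - b j)

/-- The word map `g₀`: `35^k ↦ 42^{k-1}5`, `42^k5 ↦ 42^{k-1}55` (`k ≥ 1`), `45 ↦ 35`,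
and `a ↦ a` for single letters.  (All these maps preserve length.) -/
def g0 (w : List Letter) : List Letter :=
  if w.length ≤ 1 then w
  else if w = [l4, l5] then [l3, l5]
  else if w.headI = l3 then l4 :: (List.replicate (w.length - 2) l2 ++ [l5])
  else l4 :: (List.replicate (w.length - 3) l2 ++ [l5, l5])

/-- `u = g(x)`: for some `E`-segment decomposition `x = X₁X₂⋯` (with starting positions
`b`), the sequence `u` is `g₀(X₁)g₀(X₂)⋯`, each `g₀(X_j)` occupying the positions
of `X_j` (note that `g₀` preserves lengths). -/
def gRel (x u : ℕ → Letter) : Prop :=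
  ∃ b : ℕ → ℕ, SegDecomp ESegment x b ∧
    ∀ j, fword u (b j) (b (j + 1) - b j) = g0 (fword x (b j) (b (j + 1) - b j))

/-- `E' = π_E(Ω)`. -/
def Eset' (E : Set ℂ) : Set ℂ := {p | ∃ x ∈ OmegaSeq, codes phiE E x p}

/-- `F' = π_F(Ω)`. -/
def Fset' (F : Set ℂ) : Set ℂ := {q | ∃ u ∈ OmegaSeq, codes phiF F u q}

/-- The dimension `s = log 5 / log 3`. -/
def sDim : ℝ := Real.log 5 / Real.log 3

end

/-- The shifted sequence `x_2 x_3 ⋯`. -/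
def shiftSeq (x : ℕ → Letter) : ℕ → Letter := fun n => x (n + 1)

/-- The fixed point `1 + i/2` of `φ^E_4`. -/
noncomputable def fixPt : ℂ := 1 + Complex.I / 2

lemma preWord_succ (x : ℕ → Letter) (n : ℕ) :
    preWord x (n + 1) = x 0 :: preWord (shiftSeq x) n := by
  simp [preWord, shiftSeq, List.ofFn_succ]

lemma preWord_length (x : ℕ → Letter) (n : ℕ) : (preWord x n).length = n := by
  simp [preWord]

lemma phiE_injective (j : Letter) : Function.Injective (phiE j) := by
  intro a b h
  simp only [phiE] at h
  linear_combination 3 * h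

lemma phiE_re (j : Letter) (z : ℂ) : 3 * (phiE j z).re = z.re + (dE j).re := by
  have h : phiE j z * ((3 : ℝ) : ℂ) = z + dE j := by simp [phiE]
  have := congrArg Complex.re h
  rw [Complex.re_mul_ofReal, Complex.add_re] at this
  linarith

lemma phiE_im (j : Letter) (z : ℂ) : 3 * (phiE j z).im = z.im + (dE j).im := by
  have h : phiE j z * ((3 : ℝ) : ℂ) = z + dE j := by simp [phiE]
  have := congrArg Complex.im h
  rw [Complex.im_mul_ofReal, Complex.add_im] at this
  linarith

lemma phiE_fixPt : phiE l4 fixPt = fixPt := by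
  simp [phiE, fixPt, dE, l4]
  ring

lemma dE_re_cases (j : Letter) : (dE j).re = 0 ∨ (dE j).re = 1 ∨ (dE j).re = 2 := by
  fin_cases j <;> simp [dE]

lemma dE_im_cases (j : Letter) : (dE j).im = 0 ∨ (dE j).im = 1 ∨ (dE j).im = 2 := by
  fin_cases j <;> simp [dE]

lemma letter_eq {j k : Letter} (hr : (dE j).re = (dE k).re) (hi : (dE j).im = (dE k).im) :
    j = k := by
  fin_cases j <;> fin_cases k <;> simp [dE] at hr hi ⊢

lemma eq_l4_of_im {j : Letter} (hi : (dE j).im = 1) : j = l4 := by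
  fin_cases j <;> simp [dE, l4] at hi ⊢

lemma phiE_mem {E : Set ℂ} (hE : IsAttractor phiE E) (j : Letter) {z : ℂ} (hz : z ∈ E) :
    phiE j z ∈ E := by
  rw [hE.2.2]
  exact Set.mem_iUnion.2 ⟨j, z, hz, rfl⟩

lemma exists_preimage {E : Set ℂ} (hE : IsAttractor phiE E) {z : ℂ} (hz : z ∈ E) :
    ∃ j, ∃ q ∈ E, phiE j q = z := by
  rw [hE.2.2] at hz
  simpa using hz

/-- The attractor lies in the unit square: an extremal value `M` of a coordinate satisfies
`3 * M = M' + d` with `M'` another value of it and `d ∈ {0, 1, 2}`. -/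
lemma mem_square {E : Set ℂ} (hE : IsAttractor phiE E) {z : ℂ} (hz : z ∈ E) :
    (0 ≤ z.re ∧ z.re ≤ 1) ∧ (0 ≤ z.im ∧ z.im ≤ 1) := by
  have key : ∀ f : ℂ → ℝ, Continuous f →
      (∀ j z, ∃ d : ℝ, 0 ≤ d ∧ d ≤ 2 ∧ 3 * f (phiE j z) = f z + d) → 0 ≤ f z ∧ f z ≤ 1 := by
    intro f hf hd
    obtain ⟨a, ha, hmin⟩ := hE.2.1.exists_isMinOn hE.1 hf.continuousOn
    obtain ⟨b, hb, hmax⟩ := hE.2.1.exists_isMaxOn hE.1 hf.continuousOn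
    obtain ⟨j, a', ha', rfl⟩ := exists_preimage hE ha
    obtain ⟨k, b', hb', rfl⟩ := exists_preimage hE hb
    obtain ⟨d, h0, h2, h⟩ := hd j a'
    obtain ⟨d', h0', h2', h'⟩ := hd k b'
    have e1 := isMinOn_iff.1 hmin a' ha'
    have e2 := isMaxOn_iff.1 hmax b' hb'
    have e3 := isMinOn_iff.1 hmin z hz
    have e4 := isMaxOn_iff.1 hmax z hz
    constructor <;> linarith
  constructor
  · refine key _ Complex.continuous_re fun j z => ⟨_, ?_, ?_, phiE_re j z⟩ <;>
      rcases dE_re_cases j with h | h | h <;> rw [h] <;> norm_num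
  · refine key _ Complex.continuous_im fun j z => ⟨_, ?_, ?_, phiE_im j z⟩ <;>
      rcases dE_im_cases j with h | h | h <;> rw [h] <;> norm_num

lemma codes_mem {E : Set ℂ} {x : ℕ → Letter} {p : ℂ} (h : codes phiE E x p) : p ∈ E := by
  simpa [preWord, iterPhi] using h 0

/-- `π_E(x) = φ_{x_1}(π_E(x_2 x_3 ⋯))`, in the direction that removes the first letter. -/
lemma codes_shift {E : Set ℂ} {x : ℕ → Letter} {p : ℂ} (h : codes phiE E x p) :
    ∃ q, codes phiE E (shiftSeq x) q ∧ phiE (x 0) q = p := by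
  have h' : ∀ n, ∃ q, q ∈ iterPhi phiE (preWord (shiftSeq x) n) '' E ∧ phiE (x 0) q = p := by
    intro n
    obtain ⟨e, he, hp⟩ := h (n + 1)
    rw [preWord_succ] at hp
    exact ⟨_, ⟨e, he, rfl⟩, hp⟩
  obtain ⟨q, -, hq⟩ := h' 0
  refine ⟨q, fun n => ?_, hq⟩
  obtain ⟨q', h1, h2⟩ := h' n
  rwa [phiE_injective _ (hq.trans h2.symm)]

lemma codes_of_shift {E : Set ℂ} (hE : IsAttractor phiE E) {x : ℕ → Letter} {q : ℂ}
    (h : codes phiE E (shiftSeq x) q) : codes phiE E x (phiE (x 0) q) := by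
  intro n
  cases n with
  | zero => simpa [preWord, iterPhi] using phiE_mem hE _ (codes_mem h)
  | succ n =>
    obtain ⟨e, he, hq⟩ := h n
    refine ⟨e, he, ?_⟩
    rw [preWord_succ, ← hq]
    rfl

lemma shift_mem_omega {x : ℕ → Letter} (hx : x ∈ OmegaSeq) : shiftSeq x ∈ OmegaSeq := by
  obtain ⟨N, hN⟩ := hx
  exact ⟨N, fun n hn => hN (n + 1) (by omega)⟩

/-! ### Uniqueness of codings -/

/-- Strict bounds for points with a coding ending in `4^∞`. -/
lemma omega_interior {E : Set ℂ} (hE : IsAttractor phiE E) {x : ℕ → Letter} (hx : x ∈ OmegaSeq)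
    {p : ℂ} (h : codes phiE E x p) : 0 < p.re ∧ 0 < p.im ∧ p.im < 1 := by
  obtain ⟨N, hN⟩ := hx
  induction N generalizing x p with
  | zero =>
    obtain ⟨q, hq, rfl⟩ := codes_shift h
    obtain ⟨⟨a1, a2⟩, b1, b2⟩ := mem_square hE (codes_mem hq)
    have e1 := phiE_re (x 0) q
    have e2 := phiE_im (x 0) q
    have d1 : (dE l4).re = 2 := by simp [dE, l4]
    have d2 : (dE l4).im = 1 := by simp [dE, l4]
    rw [hN 0 le_rfl] at *
    refine ⟨?_, ?_, ?_⟩ <;> linarith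
  | succ N ih =>
    obtain ⟨q, hq, rfl⟩ := codes_shift h
    obtain ⟨a, b1, b2⟩ := ih hq fun n hn => hN (n + 1) (by omega)
    have e1 := phiE_re (x 0) q
    have e2 := phiE_im (x 0) q
    rcases dE_re_cases (x 0) with h1 | h1 | h1 <;> rcases dE_im_cases (x 0) with h2 | h2 | h2 <;>
      refine ⟨?_, ?_, ?_⟩ <;> linarith

/-- The imaginary ternary expansion of a point with a coding in `Ω` is unique. -/
lemma im_digits_eq {E : Set ℂ} (hE : IsAttractor phiE E) (n : ℕ) :
    ∀ {x y : ℕ → Letter} {p p' : ℂ}, x ∈ OmegaSeq → codes phiE E x p → codes phiE E y p' →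
      p.im = p'.im → (dE (x n)).im = (dE (y n)).im := by
  induction n with
  | zero =>
    intro x y p p' hx h h' hp
    obtain ⟨q, hq, rfl⟩ := codes_shift h
    obtain ⟨q', hq', rfl⟩ := codes_shift h'
    obtain ⟨-, b1, b2⟩ := omega_interior hE (shift_mem_omega hx) hq
    obtain ⟨-, c1, c2⟩ := mem_square hE (codes_mem hq')
    have e1 := phiE_im (x 0) q
    have e2 := phiE_im (y 0) q'
    rcases dE_im_cases (x 0) with h1 | h1 | h1 <;> rcases dE_im_cases (y 0) with h2 | h2 | h2 <;>
      rw [h1, h2] <;> exfalso <;> linarith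
  | succ n ih =>
    intro x y p p' hx h h' hp
    obtain ⟨q, hq, rfl⟩ := codes_shift h
    obtain ⟨q', hq', rfl⟩ := codes_shift h'
    refine ih (x := shiftSeq x) (y := shiftSeq y) (shift_mem_omega hx) hq hq' ?_
    obtain ⟨-, b1, b2⟩ := omega_interior hE (shift_mem_omega hx) hq
    obtain ⟨-, c1, c2⟩ := mem_square hE (codes_mem hq')
    have e1 := phiE_im (x 0) q
    have e2 := phiE_im (y 0) q'
    rcases dE_im_cases (x 0) with h1 | h1 | h1 <;> rcases dE_im_cases (y 0) with h2 | h2 | h2 <;>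
      linarith

lemma omega_of_im_eq {E : Set ℂ} (hE : IsAttractor phiE E) {x y : ℕ → Letter} {p : ℂ}
    (hx : x ∈ OmegaSeq) (h : codes phiE E x p) (h' : codes phiE E y p) : y ∈ OmegaSeq := by
  have hxy := fun n => im_digits_eq hE n hx h h' rfl
  obtain ⟨N, hN⟩ := hx
  refine ⟨N, fun n hn => eq_l4_of_im ?_⟩
  rw [← hxy n, hN n hn]
  simp [dE, l4]

/-- Two codings in `Ω` of the same point coincide: the real parts of their tails lie in `(0, 1]`,
so the real digits agree as well. -/
lemma omega_unique {E : Set ℂ} (hE : IsAttractor phiE E) (n : ℕ) :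
    ∀ {x y : ℕ → Letter} {p : ℂ}, x ∈ OmegaSeq → y ∈ OmegaSeq → codes phiE E x p →
      codes phiE E y p → y n = x n := by
  have head : ∀ {x y : ℕ → Letter} {p : ℂ}, x ∈ OmegaSeq → y ∈ OmegaSeq → codes phiE E x p →
      codes phiE E y p → y 0 = x 0 := by
    intro x y p hx hy h h'
    refine letter_eq ?_ (im_digits_eq hE 0 hx h h' rfl).symm
    obtain ⟨q, hq, rfl⟩ := codes_shift h
    obtain ⟨q', hq', he⟩ := codes_shift h'
    have b1 := (omega_interior hE (shift_mem_omega hx) hq).1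
    have c1 := (omega_interior hE (shift_mem_omega hy) hq').1
    have b2 := (mem_square hE (codes_mem hq)).1.2
    have c2 := (mem_square hE (codes_mem hq')).1.2
    have e1 := phiE_re (x 0) q
    have e2 := phiE_re (y 0) q'
    rw [he] at e2
    rcases dE_re_cases (x 0) with h1 | h1 | h1 <;> rcases dE_re_cases (y 0) with h2 | h2 | h2 <;>
      rw [h1, h2] <;> exfalso <;> linarith
  induction n with
  | zero => exact head
  | succ n ih =>
    intro x y p hx hy h h'
    have h0 := head hx hy h h'
    obtain ⟨q, hq, rfl⟩ := codes_shift h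
    obtain ⟨q', hq', he⟩ := codes_shift h'
    rw [h0] at he
    rw [phiE_injective _ he] at hq'
    exact ih (x := shiftSeq x) (y := shiftSeq y) (shift_mem_omega hx) (shift_mem_omega hy) hq hq'

/-! ### Description of `E'` and density -/

lemma dist_iterPhi (w : List Letter) (a b : ℂ) :
    dist (iterPhi phiE w a) (iterPhi phiE w b) = dist a b / 3 ^ w.length := by
  induction w with
  | nil => simp [iterPhi]
  | cons j w ih =>
    have : dist (phiE j (iterPhi phiE w a)) (phiE j (iterPhi phiE w b)) =
        dist (iterPhi phiE w a) (iterPhi phiE w b) / 3 := by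
      rw [dist_eq_norm, dist_eq_norm]
      have e : phiE j (iterPhi phiE w a) - phiE j (iterPhi phiE w b) =
          (iterPhi phiE w a - iterPhi phiE w b) / 3 := by
        simp only [phiE]
        ring
      rw [e, norm_div]
      norm_num
    rw [List.length_cons, pow_succ, ← div_div, ← ih]
    exact this

/-- The fixed point of `φ_4` belongs to `E`: applying `φ_4` to the point of `E` nearest to it
divides the distance by `3`, so that distance is `0`. -/
lemma fixPt_mem {E : Set ℂ} (hE : IsAttractor phiE E) : fixPt ∈ E := by
  obtain ⟨a, ha, hmin⟩ := hE.2.1.exists_isMinOn hE.1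
    (f := fun z => dist z fixPt) (by fun_prop)
  have h1 : dist a fixPt ≤ dist (phiE l4 a) fixPt := isMinOn_iff.1 hmin _ (phiE_mem hE l4 ha)
  have h2 : dist (phiE l4 a) (phiE l4 fixPt) = dist a fixPt / 3 := by
    simpa [iterPhi] using dist_iterPhi [l4] a fixPt
  rw [phiE_fixPt] at h2
  have h3 : dist a fixPt = 0 := by linarith [dist_nonneg (x := a) (y := fixPt)]
  rwa [← dist_eq_zero.1 h3]

/-- Points of `φ_w(E)` with `w` long are close to `φ_w(c)`, uniformly in `w`. -/
lemma exists_close {E : Set ℂ} (hE : IsAttractor phiE E) {ε : ℝ} (hε : 0 < ε) :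
    ∃ n : ℕ, ∀ w : List Letter, w.length = n → ∀ e ∈ E,
      dist (iterPhi phiE w e) (iterPhi phiE w fixPt) < ε := by
  obtain ⟨n, hn⟩ := exists_pow_lt_of_lt_one
    (show 0 < ε / (Metric.diam E + 1) by have := Metric.diam_nonneg (s := E); positivity)
    (show (1 / 3 : ℝ) < 1 by norm_num)
  refine ⟨n, fun w hw e he => ?_⟩
  have hD := Metric.diam_nonneg (s := E)
  have h1 := Metric.dist_le_diam_of_mem hE.2.1.isBounded he (fixPt_mem hE)
  rw [lt_div_iff₀ (by positivity)] at hn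
  rw [dist_iterPhi, hw]
  calc dist e fixPt / 3 ^ n = (1 / 3) ^ n * dist e fixPt := by
        rw [div_pow, one_pow]
        ring
    _ ≤ (1 / 3) ^ n * (Metric.diam E + 1) := by
        gcongr
        linarith
    _ < ε := hn

lemma iterPhi_const_fixPt {x : ℕ → Letter} (hx : ∀ n, x n = l4) (n : ℕ) :
    iterPhi phiE (preWord x n) fixPt = fixPt := by
  induction n generalizing x with
  | zero => rfl
  | succ n ih =>
    rw [preWord_succ, hx 0]
    change phiE l4 (iterPhi phiE (preWord (shiftSeq x) n) fixPt) = fixPt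
    rw [ih (x := shiftSeq x) fun n => hx (n + 1), phiE_fixPt]

lemma codes_const {E : Set ℂ} (hE : IsAttractor phiE E) {x : ℕ → Letter} (hx : ∀ n, x n = l4)
    {p : ℂ} : codes phiE E x p ↔ p = fixPt := by
  constructor
  · intro h
    refine eq_of_forall_dist_le fun ε hε => ?_
    obtain ⟨n, hn⟩ := exists_close hE hε
    obtain ⟨e, he, rfl⟩ := h n
    have := hn _ (preWord_length x n) e he
    rw [iterPhi_const_fixPt hx] at this
    exact this.le
  · rintro rfl n
    exact ⟨fixPt, fixPt_mem hE, iterPhi_const_fixPt hx n⟩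

lemma eset_eq_range {E : Set ℂ} (hE : IsAttractor phiE E) :
    Eset' E = Set.range fun w : List Letter => iterPhi phiE w fixPt := by
  ext p
  constructor
  · rintro ⟨x, ⟨N, hN⟩, h⟩
    induction N generalizing x p with
    | zero => exact ⟨[], ((codes_const hE fun n => hN n (Nat.zero_le n)).1 h).symm⟩
    | succ N ih =>
      obtain ⟨q, hq, rfl⟩ := codes_shift h
      obtain ⟨w, hw⟩ := ih q (shiftSeq x) hq fun n hn => hN (n + 1) (by omega)
      exact ⟨x 0 :: w, by rw [← hw]; rfl⟩
  · rintro ⟨w, rfl⟩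
    induction w with
    | nil => exact ⟨fun _ => l4, ⟨0, fun _ _ => rfl⟩, (codes_const hE fun _ => rfl).2 rfl⟩
    | cons j w ih =>
      obtain ⟨x, ⟨N, hN⟩, h⟩ := ih
      -- the sequence `j` followed by `x`
      let y : ℕ → Letter := fun n => Nat.casesOn n j x
      refine ⟨y, ⟨N + 1, fun n hn => ?_⟩, codes_of_shift hE (x := y) h⟩
      obtain ⟨m, rfl⟩ : ∃ m, n = m + 1 := ⟨n - 1, by omega⟩
      exact hN m (by omega)

lemma exists_word {E : Set ℂ} (hE : IsAttractor phiE E) (n : ℕ) {p : ℂ} (hp : p ∈ E) :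
    ∃ w : List Letter, w.length = n ∧ ∃ e ∈ E, iterPhi phiE w e = p := by
  induction n generalizing p with
  | zero => exact ⟨[], rfl, p, hp, rfl⟩
  | succ n ih =>
    obtain ⟨j, q, hq, rfl⟩ := exists_preimage hE hp
    obtain ⟨w, hw, e, he, rfl⟩ := ih hq
    exact ⟨j :: w, by simp [hw], e, he, rfl⟩

/-- `E' = π_E(Ω)` is a countable dense subset of `E`, and every point
of `E'` has a unique coding: if `x ∈ Ω` and `π_E(y) = π_E(x)`, then `y = x`. -/
theorem stmt2 (E : Set ℂ) (hE : IsAttractor phiE E) :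
    (Eset' E).Countable ∧ Eset' E ⊆ E ∧ E ⊆ closure (Eset' E) ∧
    (∀ x ∈ OmegaSeq, ∀ y : ℕ → Letter, ∀ p : ℂ,
      codes phiE E x p → codes phiE E y p → y = x) := by
  refine ⟨?_, ?_, ?_, ?_⟩
  · rw [eset_eq_range hE]
    exact Set.countable_range _
  · rintro p ⟨x, -, h⟩
    exact codes_mem h
  · intro p hp
    refine Metric.mem_closure_iff.2 fun ε hε => ?_
    obtain ⟨n, hn⟩ := exists_close hE hε
    obtain ⟨w, hw, e, he, rfl⟩ := exists_word hE n hp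
    refine ⟨iterPhi phiE w fixPt, ?_, hn w hw e he⟩
    rw [eset_eq_range hE]
    exact ⟨w, rfl⟩
  · intro x hx y p h h'
    exact funext fun n => omega_unique hE n hx (omega_of_im_eq hE hx h h') h h'
end

section
/- Let x = (x_n)_{n≥1} ∈ Ω, and let X₁ = x_m⋯x_{m+k} and X₂ = x_n⋯x_{n+ℓ} be two distinct E-special segments of x with m ≤ n. Then m + k < n; that is, distinct E-special segments of a sequence in Ω do not overlap. -/
/-!
The letters `3` and `4` open special segments, while every later letter of a special segment
is `2` or `5` (`ESpecial.head`, `ESpecial.tail`). Hence a special segment cannot start strictly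
inside another one. Two special segments with the same start have the same type, and the type
and the start determine the length: `35^k` is maximal because the next letter is not `5`, and
`42^{k-1}5` stops at its first `5` (`ESpecial.length_le`).
-/

open MeasureTheory

theorem ESpecial.head {x : ℕ → Letter} {j L : ℕ} (h : ESpecial x j L) :
    x j = l3 ∨ x j = l4 :=
  h.imp (fun h => h.2.1) (fun h => h.2.1)

theorem ESpecial.tail {x : ℕ → Letter} {j L : ℕ} (h : ESpecial x j L) {i : ℕ}
    (hi : 1 ≤ i) (hiL : i < L) : x (j + i) = l2 ∨ x (j + i) = l5 := by
  rcases h with ⟨-, -, h, -⟩ | ⟨-, -, h, h5⟩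
  · exact Or.inr (h i hi hiL)
  · rcases Nat.lt_or_ge i (L - 1) with hlt | hge
    · exact Or.inl (h i hi hlt)
    · right
      rwa [show j + i = j + L - 1 by omega]

/-- Used in both directions, this shows that the start of a special segment determines its
length. -/
theorem ESpecial.length_le {x : ℕ → Letter} {j L L' : ℕ} (h : ESpecial x j L)
    (h' : ESpecial x j L') : L' ≤ L := by
  by_contra! hlt
  rcases h with ⟨hL, h3, -, hend⟩ | ⟨hL, h4, -, hend⟩ <;>
    rcases h' with ⟨-, h3', hmid, -⟩ | ⟨-, h4', hmid, -⟩
  · exact hend (hmid L (by omega) hlt)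
  · exact absurd (h3.symm.trans h4') (by decide)
  · exact absurd (h4.symm.trans h3') (by decide)
  · -- The final `5` of the shorter segment would be one of the inner `2`s of the longer one.
    have h2 := hmid (L - 1) (by omega) (by omega)
    rw [show j + (L - 1) = j + L - 1 by omega, hend] at h2
    exact absurd h2 (by decide)

/-- Distinct `E`-special segments of `x ∈ Ω` do not overlap: if the
factors of `x` starting at `m` (length `L₁`) and at `n` (length `L₂`) are distinct
`E`-special segments and `m ≤ n`, then the first ends before the second begins,
i.e. `m + L₁ ≤ n` (equivalently `m + k < n` with `k = L₁ - 1`). -/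
theorem stmt4 (x : ℕ → Letter) (hx : x ∈ OmegaSeq) (m n L₁ L₂ : ℕ)
    (h1 : ESpecial x m L₁) (h2 : ESpecial x n L₂)
    (hne : (m, L₁) ≠ (n, L₂)) (hmn : m ≤ n) :
    m + L₁ ≤ n := by
  rcases hmn.eq_or_lt with rfl | hlt
  · exact absurd (by rw [le_antisymm (h2.length_le h1) (h1.length_le h2)]) hne
  · by_contra! hov
    have ht := h1.tail (i := n - m) (by omega) (by omega)
    rw [show m + (n - m) = n by omega] at ht
    rcases h2.head with h | h <;> rw [h] at ht <;> exact absurd ht (by decide)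
end

section
/- Every x ∈ Ω admits exactly one factorization x = X₁X₂⋯ into consecutive finite nonempty words such that each X_j is an E-segment of x occupying the corresponding positions (the E-segment decomposition of x). -/
/-!
A special segment starts with the letter `3` or `4`, while all its other entries are `2` or `5`.
Hence two special segments that meet start at the same position, and then they have the same
length: the length of `35^k` is forced by maximality of the run of `5`s, that of `42^{k-1}5` by the
first `5`.  So special segments are pairwise disjoint (`ESpecial.eq_len`, `ESpecial.start_not_mem`).

Uniqueness: a segment is determined by its starting position (`ESegment.eq_len`), so the starting
positions of two decompositions agree by induction.

Existence: call a position a cut if it is not strictly inside a special segment.  At a cut a segment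
starts, and it ends at another cut (`IsECut.exists_next`); iterating from the cut `0` gives the
decomposition.
-/

open MeasureTheory

lemma ESpecial.two_le {x : ℕ → Letter} {p L : ℕ} (h : ESpecial x p L) : 2 ≤ L := by
  rcases h with h | h <;> exact h.1

lemma ESpecial.start {x : ℕ → Letter} {p L : ℕ} (h : ESpecial x p L) :
    x p = l3 ∨ x p = l4 := by
  rcases h with h | h
  · exact Or.inl h.2.1
  · exact Or.inr h.2.1

lemma ESpecial.interior {x : ℕ → Letter} {p L i : ℕ} (h : ESpecial x p L)
    (hpi : p < i) (hi : i < p + L) : x i = l2 ∨ x i = l5 := by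
  obtain ⟨d, rfl⟩ := Nat.exists_eq_add_of_lt hpi
  rcases h with ⟨_, _, h, _⟩ | ⟨_, _, h, h5⟩
  · exact Or.inr (h (d + 1) (by omega) (by omega))
  · by_cases hd : d + 1 < L - 1
    · exact Or.inl (h (d + 1) (by omega) hd)
    · right
      rwa [show p + d + 1 = p + L - 1 by omega]

/-- No special segment starts strictly inside another one. -/
lemma ESpecial.start_not_mem {x : ℕ → Letter} {p L q M : ℕ} (h : ESpecial x p L)
    (h' : ESpecial x q M) (hpq : p < q) : p + L ≤ q := by
  by_contra! hlt
  rcases h.interior hpq hlt with e | e <;> rcases h'.start with e' | e' <;>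
    exact absurd (e.symm.trans e') (by decide)

lemma ESpecial.len_le {x : ℕ → Letter} {p L M : ℕ} (h : ESpecial x p L)
    (h' : ESpecial x p M) : M ≤ L := by
  by_contra! hlt
  rcases h with ⟨h2, h0, h, he⟩ | ⟨h2, h0, h, he⟩ <;>
    rcases h' with ⟨h2', h0', h', he'⟩ | ⟨h2', h0', h', he'⟩
  · exact he (h' L (by omega) hlt)
  · exact absurd (h0.symm.trans h0') (by decide)
  · exact absurd (h0.symm.trans h0') (by decide)
  · have e := h' (L - 1) (by omega) (by omega)
    rw [show p + (L - 1) = p + L - 1 by omega] at e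
    exact absurd (e.symm.trans he) (by decide)

lemma ESpecial.eq_len {x : ℕ → Letter} {p L M : ℕ} (h : ESpecial x p L)
    (h' : ESpecial x p M) : L = M :=
  le_antisymm (h'.len_le h) (h.len_le h')

lemma ESegment.pos {x : ℕ → Letter} {p L : ℕ} (h : ESegment x p L) : 0 < L := by
  rcases h with h | h
  · have := h.two_le
    omega
  · omega

lemma ESegment.eq_len {x : ℕ → Letter} {p L M : ℕ} (h : ESegment x p L)
    (h' : ESegment x p M) : L = M := by
  rcases h with h | ⟨rfl, h⟩ <;> rcases h' with h' | ⟨rfl, h'⟩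
  · exact h.eq_len h'
  · exact absurd ⟨le_rfl, by have := h.two_le; omega⟩ (h' p L h)
  · exact absurd ⟨le_rfl, by have := h'.two_le; omega⟩ (h p M h')
  · rfl

/-- The position `j` is a cut of `x`: no special segment contains both entries `j - 1` and `j`. -/
def IsECut (x : ℕ → Letter) (j : ℕ) : Prop :=
  ∀ p L, ESpecial x p L → p < j → p + L ≤ j

/-- A segment starts at every cut and ends at another cut. -/
lemma IsECut.exists_next {x : ℕ → Letter} {j : ℕ} (hj : IsECut x j) :
    ∃ k, IsECut x k ∧ ESegment x j (k - j) := by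
  by_cases hp : EPlain x j
  · refine ⟨j + 1, fun p L h hlt => ?_, Or.inr ⟨by omega, hp⟩⟩
    have := hp p L h
    omega
  · unfold EPlain at hp
    push Not at hp
    obtain ⟨p, L, h, hpj, hjL⟩ := hp
    -- the special segment through `j` starts at `j`, because `j` is a cut
    obtain rfl : p = j := by
      rcases hpj.lt_or_eq with hlt | rfl
      · have := hj p L h hlt
        omega
      · rfl
    refine ⟨p + L, fun q M h' hlt => ?_, Or.inl (by simpa using h)⟩
    rcases lt_trichotomy q p with hq | rfl | hq
    · have := hj q M h' hq
      omega
    · rw [h.eq_len h']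
    · have := h.start_not_mem h' hq
      omega

/-- Every `x ∈ Ω` admits exactly one factorization into consecutive
`E`-segments (the `E`-segment decomposition), encoded by the sequence `b` of starting
positions: `b 0 = 0` and each factor on `[b j, b (j+1))` is an `E`-segment of `x`. -/
theorem stmt5 (x : ℕ → Letter) (hx : x ∈ OmegaSeq) :
    ∃! b : ℕ → ℕ, SegDecomp ESegment x b := by
  classical
  have step : ∀ c : {j // IsECut x j}, ∃ d : {j // IsECut x j}, ESegment x c.1 (d.1 - c.1) :=
    fun c => by
      obtain ⟨k, hk, hs⟩ := c.2.exists_next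
      exact ⟨⟨k, hk⟩, hs⟩
  choose next hnext using step
  let c : ℕ → {j // IsECut x j} :=
    fun n => Nat.rec ⟨0, fun p L _ h => absurd h (Nat.not_lt_zero p)⟩ (fun _ d => next d) n
  have hc : SegDecomp ESegment x (fun n => (c n).1) := ⟨rfl, fun n => hnext (c n)⟩
  refine ⟨fun n => (c n).1, hc, fun b hb => funext fun n => ?_⟩
  induction n with
  | zero => exact hb.1
  | succ n ih =>
    have h1 := hb.2 n
    have h2 := hc.2 n
    simp only at ih h2 ⊢
    rw [ih] at h1
    -- positive lengths, so the subtractions do not truncate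
    have := h1.pos
    have := h2.pos
    have := h1.eq_len h2
    omega
end

section
/- Let x, y ∈ Ω and write u = g(x), v = g(y). If n ≥ 1 and x_i = y_i for all i = 1,…,n+1, then u_i = v_i for all i = 1,…,n; if in addition x_{n+1} = 1, then also u_{n+1} = v_{n+1} = 1. In other words, the first n letters of g(x) are determined by the first n+1 letters of x, and if x_{n+1} = 1 then the (n+1)-st letter of g(x) equals 1. -/
/-!
The map `g` is a local rule: the letter `g(x)_i` depends only on `x_1, …, x_{i+1}`. Explicitly
(`localG`),

* `3` becomes `4` exactly when the next letter is `5`;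
* `4` becomes `3` exactly when the next letter is `5`;
* `5` becomes `2` exactly when it lies in a run of `5`s preceded by `3` and the next letter is `5`;
* `2` becomes `5` exactly when it lies in a run of `2`s preceded by `4` and the next letter is `5`;
* all other letters are unchanged.

`gRel_eq_localG` proves this by reading off `g₀` on each type of segment. Special segments yield the
rule directly. For a plain entry the rule must leave the letter unchanged, because each case in
which it does not exhibits a special segment containing that entry; membership in `Ω` is used here,
to know that a run of `5`s after a `3` terminates. The statement is then immediate, as
the rule visibly looks only one letter ahead and fixes `1`.
-/

open MeasureTheory

/-- Position `i` is preceded by the letter `a` followed by a (possibly empty) run of `c`s. -/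
def RunAfter (x : ℕ → Letter) (a c : Letter) (i : ℕ) : Prop :=
  ∃ p < i, x p = a ∧ ∀ q, p < q → q < i → x q = c

open Classical in
/-- The local rule computing the letter of `g(x)` at position `i` from `x 0, …, x (i + 1)`. -/
noncomputable def localG (x : ℕ → Letter) (i : ℕ) : Letter :=
  if x i = l3 then (if x (i + 1) = l5 then l4 else l3)
  else if x i = l4 then (if x (i + 1) = l5 then l3 else l4)
  else if x i = l5 then (if RunAfter x l3 l5 i ∧ x (i + 1) = l5 then l2 else l5)
  else if x i = l2 then (if RunAfter x l4 l2 i ∧ x (i + 1) = l5 then l5 else l2)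
  else x i

lemma RunAfter.congr {x y : ℕ → Letter} {a c : Letter} {i : ℕ} (h : ∀ k < i, x k = y k) :
    RunAfter x a c i ↔ RunAfter y a c i := by
  constructor
  · rintro ⟨p, hp, hpa, hq⟩
    exact ⟨p, hp, (h p hp) ▸ hpa, fun q h1 h2 => (h q h2) ▸ hq q h1 h2⟩
  · rintro ⟨p, hp, hpa, hq⟩
    exact ⟨p, hp, (h p hp).trans hpa, fun q h1 h2 => (h q h2).trans (hq q h1 h2)⟩

lemma localG_congr {x y : ℕ → Letter} {i : ℕ} (h : ∀ k < i + 2, x k = y k) :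
    localG x i = localG y i := by
  have h' : ∀ k < i, x k = y k := fun k hk => h k (by omega)
  simp only [localG]
  rw [h i (by omega), h (i + 1) (by omega), propext (RunAfter.congr (a := l3) (c := l5) h'),
    propext (RunAfter.congr (a := l4) (c := l2) h')]

lemma localG_of_eq_one {x : ℕ → Letter} {i : ℕ} (h : x i = l1) : localG x i = l1 := by
  simp [localG, h, l1, l2, l3, l4, l5]

/-- A `3` followed by a `5` starts a special segment that covers any prescribed initial part of
the run of `5`s; the run is finite because `x ∈ Ω`. -/
lemma exists_special_three {x : ℕ → Letter} (hx : x ∈ OmegaSeq) {p i : ℕ} (hpi : p < i)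
    (hp : x p = l3) (h5 : ∀ q, p < q → q ≤ i → x q = l5) :
    ∃ L, ESpecial x p L ∧ i < p + L := by
  classical
  obtain ⟨N, hN⟩ := hx
  have hex : ∃ L, i < p + L ∧ x (p + L) ≠ l5 :=
    ⟨N + i + 1, by omega, by rw [hN _ (by omega)]; decide⟩
  obtain ⟨h1, h2⟩ := Nat.find_spec hex
  refine ⟨Nat.find hex, Or.inl ⟨by omega, hp, fun k hk1 hk2 => ?_, h2⟩, h1⟩
  by_cases hki : p + k ≤ i
  · exact h5 _ (by omega) hki
  · by_contra hne
    exact Nat.find_min hex hk2 ⟨by omega, hne⟩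

/-- The local rule leaves a plain entry unchanged. -/
lemma localG_of_plain {x : ℕ → Letter} (hx : x ∈ OmegaSeq) {i : ℕ} (hi : EPlain x i) :
    localG x i = x i := by
  unfold localG
  split_ifs with h3 hn h4 hn h5 hn h2 hn
  · obtain ⟨L, hL, hlt⟩ := exists_special_three hx (Nat.lt_succ_self i) h3
      (fun q h1 h2 => by
        obtain rfl : q = i + 1 := by omega
        exact hn)
    exact absurd ⟨le_rfl, by omega⟩ (hi i L hL)
  · exact h3.symm
  · exact absurd ⟨le_rfl, by omega⟩ (hi i 2 (Or.inr ⟨le_rfl, h4, fun k _ _ => by omega, hn⟩))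
  · exact h4.symm
  · obtain ⟨⟨p, hp, hpa, hq⟩, _⟩ := hn
    obtain ⟨L, hL, hlt⟩ := exists_special_three hx hp hpa (fun q h1 h2 => by
      rcases h2.lt_or_eq with h | rfl
      · exact hq q h1 h
      · exact h5)
    exact absurd ⟨hp.le, hlt⟩ (hi p L hL)
  · exact h5.symm
  · obtain ⟨⟨p, hp, hpa, hq⟩, hn⟩ := hn
    refine absurd ⟨hp.le, by omega⟩
      (hi p (i + 2 - p) (Or.inr ⟨by omega, hpa, fun k hk1 hk2 => ?_, ?_⟩))
    · rcases Nat.lt_or_ge (p + k) i with h | h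
      · exact hq _ (by omega) h
      · rw [show p + k = i by omega, h2]
    · rw [show p + (i + 2 - p) - 1 = i + 1 by omega, hn]
  · exact h2.symm
  · rfl

lemma fword_length (x : ℕ → Letter) (j L : ℕ) : (fword x j L).length = L := by
  simp [fword]

lemma fword_headI {x : ℕ → Letter} {j L : ℕ} (hL : 2 ≤ L) : (fword x j L).headI = x j := by
  obtain ⟨k, rfl⟩ : ∃ k, L = k + 1 := ⟨L - 1, by omega⟩
  simp [fword, List.ofFn_succ]

lemma getElem?_fword {x : ℕ → Letter} {j L t : ℕ} (ht : t < L) :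
    (fword x j L)[t]? = some (x (j + t)) := by
  simp [fword, ht]

/-- The local rule describes `g₀` on segments `35^k`. -/
lemma localG_of_special_three {x u : ℕ → Letter} {j L t : ℕ} (hL : 2 ≤ L) (h3 : x j = l3)
    (h5 : ∀ i, 1 ≤ i → i < L → x (j + i) = l5) (hend : x (j + L) ≠ l5)
    (hg : fword u j L = g0 (fword x j L)) (ht : t < L) : u (j + t) = localG x (j + t) := by
  have hne : fword x j L ≠ [l4, l5] := fun h => by
    have := fword_headI (x := x) (j := j) hL
    rw [h, h3] at this
    exact absurd this (by decide)
  have hu := getElem?_fword (x := u) (j := j) ht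
  rw [hg, g0, if_neg (by rw [fword_length]; omega), if_neg hne,
    if_pos (by rw [fword_headI hL, h3]), fword_length] at hu
  rcases t with _ | t
  · have hn := h5 1 le_rfl (by omega)
    simp only [List.getElem?_cons_zero, Option.some.injEq] at hu
    rw [← hu]
    simp [localG, h3, hn]
  · have hc := h5 (t + 1) (by omega) ht
    have hrun : RunAfter x l3 l5 (j + (t + 1)) :=
      ⟨j, by omega, h3, fun q h1 h2 => by
        have := h5 (q - j) (by omega) (by omega)
        rwa [show j + (q - j) = q by omega] at this⟩
    rw [List.getElem?_cons_succ] at hu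
    by_cases hlast : t + 2 = L
    · have hn : x (j + (t + 1) + 1) ≠ l5 := by
        rwa [show j + (t + 1) + 1 = j + L by omega]
      rw [List.getElem?_append_right (by simp; omega)] at hu
      simp [show t - (L - 2) = 0 by omega] at hu
      rw [← hu]
      simp [localG, hc, hn]
      decide
    · have hn : x (j + (t + 1) + 1) = l5 := h5 (t + 2) (by omega) (by omega)
      rw [List.getElem?_append_left (by simp; omega)] at hu
      simp [show t < L - 2 by omega] at hu
      rw [← hu]
      simp [localG, hc, hn, hrun]
      decide

/-- The local rule describes `g₀` on segments `42^{k-1}5`. -/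
lemma localG_of_special_four {x u : ℕ → Letter} {j L t : ℕ} (hL : 2 ≤ L) (h4 : x j = l4)
    (h2 : ∀ i, 1 ≤ i → i < L - 1 → x (j + i) = l2) (hend : x (j + L - 1) = l5)
    (hg : fword u j L = g0 (fword x j L)) (ht : t < L) : u (j + t) = localG x (j + t) := by
  have hu := getElem?_fword (x := u) (j := j) ht
  -- The last `5` follows no `3 5 ⋯ 5`: going back from it one meets `2`s and then the `4`.
  have hnrun : ¬ RunAfter x l3 l5 (j + (L - 1)) := by
    rintro ⟨p, hp, hpa, hq⟩
    rcases lt_trichotomy p j with h | rfl | h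
    · exact absurd (h4.symm.trans (hq j h (by omega))) (by decide)
    · exact absurd (h4.symm.trans hpa) (by decide)
    · have := h2 (p - j) (by omega) (by omega)
      rw [show j + (p - j) = p by omega, hpa] at this
      exact absurd this (by decide)
  have hend' : x (j + (L - 1)) = l5 := by rwa [← Nat.add_sub_assoc (by omega)]
  have hlastval : localG x (j + (L - 1)) = l5 := by
    simp [localG, hend', hnrun, show l5 ≠ l3 by decide, show l5 ≠ l4 by decide]
  by_cases hL2 : L = 2
  · subst hL2
    have hw : fword x j 2 = [l4, l5] := by
      simp at hend'
      simp [fword, List.ofFn_succ, h4, hend']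
    rw [hg, hw, g0, if_neg (by simp), if_pos rfl] at hu
    obtain rfl | rfl : t = 0 ∨ t = 1 := by omega
    · simp at hu hend'
      simp [localG, h4, hend', ← hu]
      decide
    · simp at hu hlastval
      rw [hlastval, hu]
  · have hne : fword x j L ≠ [l4, l5] := fun h => by
      have := congrArg List.length h
      rw [fword_length] at this
      exact hL2 this
    rw [hg, g0, if_neg (by rw [fword_length]; omega), if_neg hne,
      if_neg (by rw [fword_headI hL, h4]; decide), fword_length] at hu
    rcases t with _ | t
    · have hn : x (j + 1) = l2 := h2 1 le_rfl (by omega)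
      simp only [List.getElem?_cons_zero, Option.some.injEq] at hu
      rw [← hu]
      simp [localG, h4, hn]
      decide
    · rw [List.getElem?_cons_succ] at hu
      by_cases hlast : t + 2 = L
      · rw [show t + 1 = L - 1 by omega] at hu ⊢
        rw [hlastval]
        rw [List.getElem?_append_right (by simp; omega)] at hu
        simp [show t - (L - 3) = 1 by omega] at hu
        exact hu.symm
      · have hc := h2 (t + 1) (by omega) (by omega)
        have hrun : RunAfter x l4 l2 (j + (t + 1)) :=
          ⟨j, by omega, h4, fun q h1 h3 => by
            have := h2 (q - j) (by omega) (by omega)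
            rwa [show j + (q - j) = q by omega] at this⟩
        by_cases hpen : t + 3 = L
        · have hn : x (j + (t + 1) + 1) = l5 := by
            rwa [show j + (t + 1) + 1 = j + (L - 1) by omega]
          rw [List.getElem?_append_right (by simp; omega)] at hu
          simp [show t - (L - 3) = 0 by omega] at hu
          rw [← hu]
          simp [localG, hc, hn, hrun, show l2 ≠ l3 by decide, show l2 ≠ l4 by decide,
            show l2 ≠ l5 by decide]
        · have hn : x (j + (t + 1) + 1) = l2 := h2 (t + 2) (by omega) (by omega)
          rw [List.getElem?_append_left (by simp; omega)] at hu
          simp [show t < L - 3 by omega] at hu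
          rw [← hu]
          simp [localG, hc, hn, show l2 ≠ l3 by decide, show l2 ≠ l4 by decide,
            show l2 ≠ l5 by decide]

/-- `g` is given by the local rule. -/
lemma gRel_eq_localG {x u : ℕ → Letter} (hx : x ∈ OmegaSeq) (hu : gRel x u) (i : ℕ) :
    u i = localG x i := by
  obtain ⟨b, ⟨hb0, hseg⟩, hg⟩ := hu
  have hpos : ∀ j, b j < b (j + 1) := fun j => by
    rcases hseg j with (⟨h, -⟩ | ⟨h, -⟩) | ⟨h, -⟩ <;> omega
  have hmono : StrictMono b := strictMono_nat_of_lt_succ hpos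
  obtain ⟨j, hj1, hj2⟩ : ∃ j, b j ≤ i ∧ i < b (j + 1) := by
    have hex : ∃ k, i < b k := ⟨i + 1, hmono.le_apply⟩
    classical
    have h0 : Nat.find hex ≠ 0 := fun h => by
      have := Nat.find_spec hex
      rw [h] at this
      omega
    obtain ⟨k, hk⟩ := Nat.exists_eq_succ_of_ne_zero h0
    refine ⟨k, ?_, ?_⟩
    · exact not_lt.mp (Nat.find_min hex (by omega))
    · have := Nat.find_spec hex
      rwa [hk] at this
  obtain ⟨t, rfl⟩ := Nat.exists_eq_add_of_le hj1
  have ht : t < b (j + 1) - b j := by omega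
  rcases hseg j with (⟨hL, h3, h5, hend⟩ | ⟨hL, h4, h2, hend⟩) | ⟨hL, hplain⟩
  · exact localG_of_special_three hL h3 h5 hend (hg j) ht
  · exact localG_of_special_four hL h4 h2 hend (hg j) ht
  · obtain rfl : t = 0 := by omega
    have h := hg j
    rw [hL] at h
    simp [g0, fword] at h
    rw [add_zero, h, localG_of_plain hx hplain]

/-- For `x, y ∈ Ω` with `u = g(x)`, `v = g(y)`: if `n ≥ 1` and the
first `n+1` letters of `x` and `y` agree, then the first `n` letters of `u` and `v`
agree; if moreover the `(n+1)`-st letter of `x` is `1`, then the `(n+1)`-st letters of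
`u` and `v` both equal `1`.  (Positions are 0-indexed: `x i` is the `(i+1)`-st letter.) -/
theorem stmt9 (x y : ℕ → Letter) (hx : x ∈ OmegaSeq) (hy : y ∈ OmegaSeq)
    (u v : ℕ → Letter) (hu : gRel x u) (hv : gRel y v)
    (n : ℕ) (hn : 1 ≤ n) (hxy : ∀ i < n + 1, x i = y i) :
    (∀ i < n, u i = v i) ∧ (x n = l1 → u n = l1 ∧ v n = l1) := by
  have hux := gRel_eq_localG hx hu
  have hvy := gRel_eq_localG hy hv
  refine ⟨fun i hi => ?_, fun h1 => ⟨?_, ?_⟩⟩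
  · rw [hux, hvy]
    exact localG_congr fun k hk => hxy k (by omega)
  · rw [hux, localG_of_eq_one h1]
  · rw [hvy, localG_of_eq_one ((hxy n (by omega)).symm.trans h1)]
end
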